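/- Let S² be the unit sphere in ℝ³ with geodesic distance d and surface measure μ, fix a finite set 𝒫 of smooth real vector fields on S² spanning the tangent space at each point, set 𝒫₀ = 𝒫 ∪ {identity}, and fix a > 1. Then there exists C₁ > 0 as follows. Suppose for each j ∈ ℤ, {E_{j,k} : 1 ≤ k ≤ N_j} is a finite disjoint measurable partition of S² with each E_{j,k} of diameter less than a^j, x_{j,k} ∈ E_{j,k}, and φ_{j,k}, ψ_{j,k} ∈ ℳ_{x_{j,k}, a^j}. Suppose F is an r-bump function on S² for some r with 0 < r ≤ π/10. Then for every x ∈ S², ∑_{j∈ℤ} ∑_{k=1}^{N_j} μ(E_{j,k}) |⟨F, φ_{j,k}⟩| |ψ_{j,k}(x)| ≤ C₁, with the series converging uniformly in x; moreover C₁ can be chosen independently of the choices of {φ_{j,k}}, {ψ_{j,k}}, {E_{j,k}}, {x_{j,k}}, r and F. -/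

import Mathlib

open Metric Manifold MeasureTheory
open scoped RealInnerProductSpace

noncomputable section

abbrev E3 : Type := EuclideanSpace ℝ (Fin 3)

/-- The unit sphere `S² ⊆ ℝ³`. -/
abbrev Sph : Type := Metric.sphere (0 : E3) 1

instance : Fact (Module.finrank ℝ E3 = 2 + 1) := ⟨by simp⟩

/-- The geodesic distance on the sphere, `d(x,y) = arccos⟨x,y⟩`. -/
def gdist (x y : Sph) : ℝ := Real.arccos ⟪(x : E3), (y : E3)⟫

/-- The surface measure on the sphere. -/
def sphMeasure : Measure Sph := (volume : Measure E3).toSphere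

/-- A vector field `X` applied to a function `ω : S² → ℂ`, i.e. `(Xω)(x)`. -/
def mderivApplyS (ω : Sph → ℂ) (x : Sph) (v : TangentSpace (𝓡 2) x) : ℂ :=
  mfderiv (𝓡 2) 𝓘(ℝ, ℂ) ω x v

/-- The class `ℳ_{x,t}`: smooth mean-zero functions `φ` on `S²` such that
`t^{2+deg Y} |(d(x,y)/t)^N (Yφ)(y)| ≤ 1` for all `y ∈ S²`, `Y ∈ 𝒫₀ = 𝒫 ∪ {id}`
and integers `0 ≤ N ≤ 4`, where `𝒫 = {X i}`. -/
def MClass {ι : Type*} (X : ι → (x : Sph) → TangentSpace (𝓡 2) x)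
    (x : Sph) (t : ℝ) : Set (Sph → ℂ) :=
  {φ | ContMDiff (𝓡 2) 𝓘(ℝ, ℂ) (⊤ : ℕ∞) φ ∧
    (∫ y, φ y ∂sphMeasure) = 0 ∧
    (∀ (y : Sph) (N : ℕ), N ≤ 4 → t ^ 2 * ((gdist x y / t) ^ N * ‖φ y‖) ≤ 1) ∧
    (∀ i : ι, ∀ (y : Sph) (N : ℕ), N ≤ 4 →
      t ^ 3 * ((gdist x y / t) ^ N * ‖mderivApplyS φ y (X i y)‖) ≤ 1)}

/-- The inner product `⟨F,φ⟩ = ∫ F φ̄ dμ` on the sphere. -/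
def sphInner (F φ : Sph → ℂ) : ℂ := ∫ y, F y * (starRingEnd ℂ) (φ y) ∂sphMeasure

/-- An `r`-bump function on `S²` relative to the family of vector fields `X i`:
a `C¹` function supported in some geodesic ball `B(p,r)` with `‖ω‖_∞ ≤ 1` and
`max_i ‖(X i)ω‖_∞ ≤ 1/r`. -/
def IsSphBump {ι : Type*} (X : ι → (x : Sph) → TangentSpace (𝓡 2) x)
    (r : ℝ) (ω : Sph → ℂ) : Prop :=
  ContMDiff (𝓡 2) 𝓘(ℝ, ℂ) 1 ω ∧
  (∃ p : Sph, tsupport ω ⊆ {y | gdist p y < r}) ∧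
  (∀ x, ‖ω x‖ ≤ 1) ∧
  (∀ i : ι, ∀ x, ‖mderivApplyS ω x (X i x)‖ ≤ 1 / r)

/-!
A mean-zero molecule `φ` at scale `t` pairs with an `r`-bump `F` to `O(min (t / r) (r / t))`: for
`t ≤ r` subtract from `F` its value at the centre of `φ` and use that `F` is `O(1 / r)`-Lipschitz;
for `r ≤ t` bound `φ` by `O(t⁻²)` on the support of `F`, a cap of area `O(r²)`. Meanwhile
`∑ₖ μ(Eⱼₖ) |ψⱼₖ(x)|` is a Riemann sum of the integral of a kernel of scale `aʲ`, so it is bounded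
uniformly in `j` and `x`. Summing over `j` leaves the two-sided geometric series
`∑ⱼ min (aʲ / r) (r / aʲ)`, whose sum is bounded independently of `r` and whose tails do not depend
on `x`.
-/

open Filter Topology Function
open scoped NNReal ENNReal ComplexConjugate

section Series

lemma summable_zpow_neg_abs {a : ℝ} (ha : 1 < a) : Summable fun m : ℤ => a ^ (-|m|) := by
  have ha_inv : a⁻¹ < 1 := inv_lt_one_of_one_lt₀ ha
  refine Summable.of_nat_of_neg ?_ ?_ <;>
    simpa using summable_geometric_of_lt_one (by positivity) ha_inv

lemma min_zpow_div_le {a r : ℝ} (ha : 1 < a) {j₀ : ℤ} (hr : r ∈ Set.Ico (a ^ j₀) (a ^ (j₀ + 1)))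
    (j : ℤ) : min (a ^ j / r) (r / a ^ j) ≤ a * a ^ (-|j - j₀|) := by
  have ha₀ : 0 < a := zero_lt_one.trans ha
  rcases le_total j j₀ with hj | hj
  · calc min (a ^ j / r) (r / a ^ j) ≤ a ^ j / a ^ j₀ :=
          (min_le_left _ _).trans (by gcongr; exact hr.1)
      _ = a ^ (-|j - j₀|) := by
          rw [abs_of_nonpos (by omega), neg_neg, zpow_sub₀ ha₀.ne']
      _ ≤ a * a ^ (-|j - j₀|) := le_mul_of_one_le_left (by positivity) ha.le
  · calc min (a ^ j / r) (r / a ^ j) ≤ a ^ (j₀ + 1) / a ^ j :=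
          (min_le_right _ _).trans (by gcongr; exact hr.2.le)
      _ = a * a ^ (-|j - j₀|) := by
          rw [abs_of_nonneg (by omega), neg_sub, zpow_sub₀ ha₀.ne', zpow_add_one₀ ha₀.ne']
          ring

lemma exists_tsum_min_zpow_div_le {a : ℝ} (ha : 1 < a) :
    ∃ S : ℝ, 0 ≤ S ∧ ∀ r : ℝ, 0 < r → Summable (fun j : ℤ => min (a ^ j / r) (r / a ^ j)) ∧
      ∑' j : ℤ, min (a ^ j / r) (r / a ^ j) ≤ S := by
  have : 0 < a := zero_lt_one.trans ha
  refine ⟨∑' m : ℤ, a * a ^ (-|m|), tsum_nonneg fun m => by positivity, fun r hr => ?_⟩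
  obtain ⟨j₀, hj₀⟩ := exists_mem_Ico_zpow hr ha
  have hsum : Summable ((fun m : ℤ => a * a ^ (-|m|)) ∘ Equiv.subRight j₀) :=
    (Equiv.summable_iff _).2 ((summable_zpow_neg_abs ha).mul_left a)
  have hle (j : ℤ) : min (a ^ j / r) (r / a ^ j) ≤ a * a ^ (-|Equiv.subRight j₀ j|) :=
    min_zpow_div_le ha hj₀ j
  have hmin : Summable fun j : ℤ => min (a ^ j / r) (r / a ^ j) :=
    hsum.of_nonneg_of_le (fun j => by positivity) hle
  refine ⟨hmin, (hmin.tsum_le_tsum hle hsum).trans_eq ?_⟩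
  exact (Equiv.subRight j₀).tsum_eq fun m : ℤ => a * a ^ (-|m|)

variable {J β : Type*} {κ : J → Type*} [∀ j, Fintype (κ j)] {f : (Σ j, κ j) → β → ℝ} {M : J → ℝ}

lemma summable_sigma_of_sum_le {g : (Σ j, κ j) → ℝ} (hg : ∀ p, 0 ≤ g p) (hM : Summable M)
    (hgM : ∀ j, ∑ k, g ⟨j, k⟩ ≤ M j) : Summable g := by
  refine (summable_sigma_of_nonneg hg).2 ⟨fun j => (hasSum_fintype _).summable, ?_⟩
  simp only [tsum_fintype]
  exact hM.of_nonneg_of_le (fun j => Finset.sum_nonneg fun k _ => hg _) hgM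

lemma tsum_sigma_le_of_sum_le {g : (Σ j, κ j) → ℝ} (hg : ∀ p, 0 ≤ g p) (hM : Summable M)
    (hgM : ∀ j, ∑ k, g ⟨j, k⟩ ≤ M j) : ∑' p, g p ≤ ∑' j, M j := by
  have hsum := summable_sigma_of_sum_le hg hM hgM
  rw [hsum.tsum_sigma]
  refine hsum.sigma.tsum_le_tsum (fun j => ?_) hM
  simpa only [tsum_fintype] using hgM j

-- A finite set of indices containing the blocks over `s` leaves at most the tail of `M` off `s`.
lemma tendstoUniformly_sum_sigma (hf : ∀ p x, 0 ≤ f p x) (hM : Summable M)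
    (hfM : ∀ j x, ∑ k, f ⟨j, k⟩ x ≤ M j) :
    TendstoUniformly (fun (s : Finset (Σ j, κ j)) x => ∑ p ∈ s, f p x)
      (fun x => ∑' p, f p x) atTop := by
  have hsum (x : β) := summable_sigma_of_sum_le (fun p => hf p x) hM (fun j => hfM j x)
  have hblock : TendstoUniformly (fun (s : Finset J) x => ∑ j ∈ s, ∑ k, f ⟨j, k⟩ x)
      (fun x => ∑' j, ∑ k, f ⟨j, k⟩ x) atTop := by
    refine tendstoUniformly_tsum hM fun j x => ?_
    rw [Real.norm_of_nonneg (Finset.sum_nonneg fun k _ => hf _ _)]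
    exact hfM j x
  have htsum (x : β) : ∑' j, ∑ k, f ⟨j, k⟩ x = ∑' p, f p x := by
    simp only [(hsum x).tsum_sigma, tsum_fintype]
  simp only [htsum] at hblock
  rw [Metric.tendstoUniformly_iff] at hblock ⊢
  intro ε hε
  obtain ⟨s, hs⟩ := (hblock ε hε).exists
  filter_upwards [eventually_ge_atTop (s.sigma fun _ => Finset.univ)] with S hS x
  have hlower : ∑ j ∈ s, ∑ k, f ⟨j, k⟩ x ≤ ∑ p ∈ S, f p x := by
    rw [← Finset.sum_sigma s (fun _ => Finset.univ) fun p => f p x]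
    exact Finset.sum_le_sum_of_subset_of_nonneg hS fun p _ _ => hf p x
  have hupper : ∑ p ∈ S, f p x ≤ ∑' p, f p x := (hsum x).sum_le_tsum S fun p _ => hf p x
  have hclose := (abs_lt.1 (hs x)).2
  rw [Real.dist_eq, abs_of_nonneg (sub_nonneg.2 hupper)]
  linarith

end Series

section MetricMeasure

variable {α : Type*} [PseudoMetricSpace α]

/-- The kernel `t⁻ᵈ (1 + dist x y / t)⁻ᵐ` at scale `t` on a `d`-dimensional space. -/
def decayKernel (d m : ℕ) (t : ℝ) (x y : α) : ℝ :=
  (t ^ d * (1 + dist x y / t) ^ m)⁻¹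

section Kernel

variable {d m : ℕ} {t : ℝ} {x y z : α}

lemma decayKernel_nonneg (ht : 0 < t) : 0 ≤ decayKernel d m t x y := by
  unfold decayKernel; positivity

lemma decayKernel_comm (x y : α) : decayKernel d m t x y = decayKernel d m t y x := by
  rw [decayKernel, decayKernel, dist_comm]

lemma decayKernel_le_inv_pow (ht : 0 < t) : decayKernel d m t x y ≤ (t ^ d)⁻¹ := by
  unfold decayKernel
  have hdist : 0 ≤ dist x y / t := by positivity
  gcongr
  exact le_mul_of_one_le_right (by positivity) (one_le_pow₀ (le_add_of_nonneg_right hdist))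

lemma decayKernel_eq_mul_succ (ht : 0 < t) :
    decayKernel d m t x y = (1 + dist x y / t) * decayKernel d (m + 1) t x y := by
  unfold decayKernel
  have : 0 < 1 + dist x y / t := by positivity
  rw [pow_succ]
  field_simp

lemma decayKernel_succ_le (ht : 0 < t) : decayKernel d (m + 1) t x y ≤ decayKernel d m t x y := by
  rw [decayKernel_eq_mul_succ (m := m) ht]
  have hdist : 0 ≤ dist x y / t := by positivity
  exact le_mul_of_one_le_left (decayKernel_nonneg ht) (le_add_of_nonneg_right hdist)

lemma dist_mul_decayKernel_succ_le (ht : 0 < t) :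
    dist x y * decayKernel d (m + 1) t x y ≤ t * decayKernel d m t x y := by
  have hker : 0 ≤ decayKernel d (m + 1) t x y := decayKernel_nonneg ht
  calc dist x y * decayKernel d (m + 1) t x y
      ≤ (t + dist x y) * decayKernel d (m + 1) t x y := by gcongr; linarith
    _ = t * decayKernel d m t x y := by
      rw [decayKernel_eq_mul_succ (m := m) ht]
      field_simp

lemma inv_mul_pow_le_of_le_two_mul {c u v : ℝ} (hc : 0 < c) (hv : 0 < v) (huv : v ≤ 2 * u)
    (m : ℕ) : (c * u ^ m)⁻¹ ≤ 2 ^ m * (c * v ^ m)⁻¹ := by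
  have hu : 0 < u := by linarith
  rw [← div_eq_mul_inv, inv_eq_one_div, div_le_div_iff₀ (by positivity) (by positivity), one_mul]
  calc c * v ^ m ≤ c * (2 * u) ^ m := by gcongr
    _ = 2 ^ m * (c * u ^ m) := by rw [mul_pow]; ring

lemma decayKernel_le_of_dist_le (ht : 0 < t) (hxz : dist x z ≤ t) :
    decayKernel d m t x y ≤ 2 ^ m * decayKernel d m t z y := by
  have hzy : 1 + dist z y / t ≤ 2 * (1 + dist x y / t) := by
    have htri : dist z y ≤ t + dist x y := (dist_triangle_left z y x).trans (by gcongr)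
    have hdiv : dist z y / t ≤ 1 + dist x y / t := by
      rw [← div_self ht.ne', ← add_div]; gcongr
    have : 0 ≤ dist x y / t := by positivity
    linarith
  exact inv_mul_pow_le_of_le_two_mul (by positivity) (by positivity) hzy m

lemma exists_dyadic_radius (ht : 0 < t) (x y : α) :
    ∃ i : ℕ, y ∈ closedBall x (2 ^ i * t) ∧ (2 : ℝ) ^ i ≤ 2 * (1 + dist x y / t) := by
  have hdist : 0 ≤ dist x y / t := by positivity
  obtain ⟨i, hi, hi'⟩ := exists_nat_pow_near (le_add_of_nonneg_right hdist) one_lt_two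
  refine ⟨i + 1, ?_, by rw [pow_succ]; linarith⟩
  rw [mem_closedBall', ← div_le_iff₀ ht]
  linarith

lemma ofReal_decayKernel_le_tsum_indicator (ht : 0 < t) (x y : α) :
    ENNReal.ofReal (decayKernel d m t x y) ≤ ∑' i : ℕ, (closedBall x (2 ^ i * t)).indicator
      (fun _ => ENNReal.ofReal (2 ^ m * (t ^ d * (2 ^ i) ^ m)⁻¹)) y := by
  obtain ⟨i, hy, hi⟩ := exists_dyadic_radius ht x y
  refine le_trans ?_ (ENNReal.le_tsum i)
  rw [Set.indicator_of_mem hy]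
  refine ENNReal.ofReal_le_ofReal ?_
  exact inv_mul_pow_le_of_le_two_mul (by positivity) (by positivity) hi m

end Kernel

variable [MeasurableSpace α]

/-- Upper Ahlfors regularity of dimension `d`: balls of radius `s` have measure at most `C sᵈ`. -/
def IsUpperRegular (μ : Measure α) (d : ℕ) (C : ℝ≥0) : Prop :=
  ∀ (x : α) (s : ℝ), 0 < s → μ (closedBall x s) ≤ ENNReal.ofReal (C * s ^ d)

variable {𝕜 : Type*} [RCLike 𝕜]

/-- A function of mean zero concentrated around `x` at scale `t`. The decay exponent `d + 2`
leaves the integrable kernel of exponent `d + 1` after multiplication by the distance to `x`. -/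
structure IsMolecule (μ : Measure α) (d : ℕ) (A : ℝ≥0) (x : α) (t : ℝ) (φ : α → 𝕜) : Prop where
  integrable : Integrable φ μ
  integral_eq_zero : ∫ y, φ y ∂μ = 0
  norm_le : ∀ y, ‖φ y‖ ≤ A * decayKernel d (d + 2) t x y

/-- A function bounded by one, supported in a closed ball of radius `r`, and varying at the rate
`K / r` that this radius suggests. -/
structure IsLipschitzBump (K : ℝ≥0) (r : ℝ) (F : α → 𝕜) : Prop where
  exists_support_subset : ∃ p, support F ⊆ closedBall p r
  norm_le_one : ∀ y, ‖F y‖ ≤ 1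
  lipschitzWith : LipschitzWith (K / r.toNNReal) F

variable {μ : Measure α} {d : ℕ} {A C K : ℝ≥0} {t r : ℝ} {x : α} {F φ : α → 𝕜}

lemma IsMolecule.norm_integral_mul_conj_le_of_support (hμ : IsUpperRegular μ d C) (ht : 0 < t)
    (hφ : IsMolecule μ d A x t φ) (hr : 0 < r) (hF : ∀ y, ‖F y‖ ≤ 1) {p : α}
    (hsupp : support F ⊆ closedBall p r) :
    ‖∫ y, F y * conj (φ y) ∂μ‖ ≤ A * C * (r / t) ^ d := by
  have hbound (y : α) : ‖F y * conj (φ y)‖ ≤ A * (t ^ d)⁻¹ := by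
    calc ‖F y * conj (φ y)‖ = ‖F y‖ * ‖φ y‖ := by rw [norm_mul, RCLike.norm_conj]
      _ ≤ 1 * (A * (t ^ d)⁻¹) := by
          gcongr
          · exact hF y
          · exact (hφ.norm_le y).trans (by gcongr; exact decayKernel_le_inv_pow ht)
      _ = A * (t ^ d)⁻¹ := one_mul _
  have hball : μ (closedBall p r) < ∞ := (hμ p r hr).trans_lt ENNReal.ofReal_lt_top
  have hrestrict : ∫ y, F y * conj (φ y) ∂μ = ∫ y in closedBall p r, F y * conj (φ y) ∂μ := by
    refine (setIntegral_eq_integral_of_forall_compl_eq_zero fun y hy => ?_).symm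
    rw [notMem_support.1 fun h => hy (hsupp h), zero_mul]
  rw [hrestrict]
  calc ‖∫ y in closedBall p r, F y * conj (φ y) ∂μ‖
      ≤ A * (t ^ d)⁻¹ * μ.real (closedBall p r) :=
        norm_setIntegral_le_of_norm_le_const hball fun y _ => hbound y
    _ ≤ A * (t ^ d)⁻¹ * (C * r ^ d) := by
        gcongr
        exact ENNReal.toReal_le_of_le_ofReal (by positivity) (hμ p r hr)
    _ = A * C * (r / t) ^ d := by rw [div_pow]; ring

variable [OpensMeasurableSpace α]

lemma lintegral_decayKernel_le (hμ : IsUpperRegular μ d C) (ht : 0 < t) (x : α) :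
    ∫⁻ y, ENNReal.ofReal (decayKernel d (d + 1) t x y) ∂μ ≤ ENNReal.ofReal (2 ^ (d + 2) * C) := by
  let c (i : ℕ) : ℝ := 2 ^ (d + 1) * (t ^ d * (2 ^ i) ^ (d + 1))⁻¹
  have hmeas (i : ℕ) : MeasurableSet (closedBall x (2 ^ i * t)) := measurableSet_closedBall
  calc ∫⁻ y, ENNReal.ofReal (decayKernel d (d + 1) t x y) ∂μ
      ≤ ∫⁻ y, ∑' i, (closedBall x (2 ^ i * t)).indicator (fun _ => ENNReal.ofReal (c i)) y ∂μ :=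
        lintegral_mono (ofReal_decayKernel_le_tsum_indicator ht x)
    _ = ∑' i, ENNReal.ofReal (c i) * μ (closedBall x (2 ^ i * t)) := by
        rw [lintegral_tsum fun i => (measurable_const.indicator (hmeas i)).aemeasurable]
        simp only [lintegral_indicator_const (hmeas _)]
    _ ≤ ∑' i : ℕ, ENNReal.ofReal (2 ^ (d + 1) * C * (1 / 2) ^ i) := by
        refine ENNReal.tsum_le_tsum fun i => ?_
        grw [hμ x (2 ^ i * t) (by positivity), ← ENNReal.ofReal_mul (by positivity)]
        refine (congrArg ENNReal.ofReal ?_).le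
        simp only [c, one_div, inv_pow, mul_pow, pow_succ]
        field_simp
    _ = ENNReal.ofReal (2 ^ (d + 2) * C) := by
        rw [← ENNReal.ofReal_tsum_of_nonneg (fun i => by positivity)
          (summable_geometric_two.mul_left _), tsum_mul_left, tsum_geometric_two]
        ring_nf

lemma measurable_decayKernel (m : ℕ) (x : α) : Measurable (decayKernel d m t x) := by
  unfold decayKernel
  fun_prop

lemma integrable_decayKernel (hμ : IsUpperRegular μ d C) (ht : 0 < t) (x : α) :
    Integrable (decayKernel d (d + 1) t x) μ := by
  refine ⟨(measurable_decayKernel _ x).aestronglyMeasurable, ?_⟩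
  rw [hasFiniteIntegral_iff_ofReal (.of_forall fun y => decayKernel_nonneg ht)]
  exact (lintegral_decayKernel_le hμ ht x).trans_lt ENNReal.ofReal_lt_top

lemma integral_decayKernel_le (hμ : IsUpperRegular μ d C) (ht : 0 < t) (x : α) :
    ∫ y, decayKernel d (d + 1) t x y ∂μ ≤ 2 ^ (d + 2) * C := by
  rw [integral_eq_lintegral_of_nonneg_ae (.of_forall fun y => decayKernel_nonneg ht)
    (measurable_decayKernel _ x).aestronglyMeasurable]
  exact ENNReal.toReal_le_of_le_ofReal (by positivity) (lintegral_decayKernel_le hμ ht x)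

-- The mean-zero condition lets one subtract `F x` from `F`.
lemma IsMolecule.norm_integral_mul_conj_le_of_lipschitz (hμ : IsUpperRegular μ d C) (ht : 0 < t)
    (hφ : IsMolecule μ d A x t φ) {L : ℝ≥0} (hF : LipschitzWith L F) :
    ‖∫ y, F y * conj (φ y) ∂μ‖ ≤ 2 ^ (d + 2) * A * C * L * t := by
  have hbound (y : α) :
      ‖(F y - F x) * conj (φ y)‖ ≤ L * A * t * decayKernel d (d + 1) t x y := by
    calc ‖(F y - F x) * conj (φ y)‖ = ‖F y - F x‖ * ‖φ y‖ := by rw [norm_mul, RCLike.norm_conj]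
      _ ≤ (L * dist x y) * (A * decayKernel d (d + 2) t x y) := by
          gcongr
          · rw [← dist_eq_norm, dist_comm x]; exact hF.dist_le_mul y x
          · exact hφ.norm_le y
      _ = L * A * (dist x y * decayKernel d (d + 2) t x y) := by ring
      _ ≤ L * A * (t * decayKernel d (d + 1) t x y) := by
          gcongr L * A * ?_; exact dist_mul_decayKernel_succ_le ht
      _ = L * A * t * decayKernel d (d + 1) t x y := by ring
  have hdom : Integrable (fun y => L * A * t * decayKernel d (d + 1) t x y) μ :=
    (integrable_decayKernel hμ ht x).const_mul _
  have hconj : Integrable (fun y => conj (φ y)) μ :=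
    RCLike.conjCLE.toContinuousLinearMap.integrable_comp hφ.integrable
  have hdiff : Integrable (fun y => (F y - F x) * conj (φ y)) μ :=
    hdom.mono' ((hF.continuous.sub continuous_const).aestronglyMeasurable.mul
      hconj.aestronglyMeasurable) (.of_forall hbound)
  have hcancel : ∫ y, F y * conj (φ y) ∂μ = ∫ y, (F y - F x) * conj (φ y) ∂μ := by
    have hconst : ∫ y, F x * conj (φ y) ∂μ = 0 := by
      rw [integral_const_mul, integral_conj, hφ.integral_eq_zero, map_zero, mul_zero]
    rw [← add_zero (∫ y, (F y - F x) * conj (φ y) ∂μ), ← hconst,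
      ← integral_add hdiff (hconj.const_mul _)]
    simp only [sub_mul, sub_add_cancel]
  rw [hcancel]
  calc ‖∫ y, (F y - F x) * conj (φ y) ∂μ‖
      ≤ ∫ y, L * A * t * decayKernel d (d + 1) t x y ∂μ :=
        norm_integral_le_of_norm_le hdom (.of_forall hbound)
    _ = L * A * t * ∫ y, decayKernel d (d + 1) t x y ∂μ := integral_const_mul _ _
    _ ≤ L * A * t * (2 ^ (d + 2) * C) := by gcongr; exact integral_decayKernel_le hμ ht x
    _ = 2 ^ (d + 2) * A * C * L * t := by ring

lemma IsMolecule.norm_integral_mul_conj_le_min (hμ : IsUpperRegular μ d C) (hd : d ≠ 0)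
    (ht : 0 < t) (hφ : IsMolecule μ d A x t φ) (hr : 0 < r) (hF : IsLipschitzBump K r F) :
    ‖∫ y, F y * conj (φ y) ∂μ‖ ≤ A * C * (2 ^ (d + 2) * K + 1) * min (t / r) (r / t) := by
  rcases le_total t r with htr | hrt
  · have hmin : min (t / r) (r / t) = t / r :=
      min_eq_left (((div_le_one hr).2 htr).trans ((one_le_div ht).2 htr))
    calc ‖∫ y, F y * conj (φ y) ∂μ‖
        ≤ 2 ^ (d + 2) * A * C * (K / r.toNNReal : ℝ≥0) * t :=
          hφ.norm_integral_mul_conj_le_of_lipschitz hμ ht hF.lipschitzWith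
      _ = A * C * (2 ^ (d + 2) * K) * (t / r) := by
          rw [NNReal.coe_div, Real.coe_toNNReal r hr.le]; ring
      _ ≤ A * C * (2 ^ (d + 2) * K + 1) * min (t / r) (r / t) := by
          rw [hmin]; gcongr; exact le_add_of_nonneg_right zero_le_one
  · have hmin : min (t / r) (r / t) = r / t :=
      min_eq_right (((div_le_one ht).2 hrt).trans ((one_le_div hr).2 hrt))
    obtain ⟨p, hp⟩ := hF.exists_support_subset
    calc ‖∫ y, F y * conj (φ y) ∂μ‖ ≤ A * C * (r / t) ^ d :=
          hφ.norm_integral_mul_conj_le_of_support hμ ht hr hF.norm_le_one hp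
      _ ≤ A * C * 1 * (r / t) := by
          rw [mul_one]; gcongr
          exact pow_le_of_le_one (by positivity) ((div_le_one ht).2 hrt) hd
      _ ≤ A * C * (2 ^ (d + 2) * K + 1) * min (t / r) (r / t) := by
          rw [hmin]; gcongr; exact le_add_of_nonneg_left (by positivity)

section Partition

variable {κ : Type*} [Fintype κ] {E : κ → Set α} {c : κ → α} {φ ψ : κ → α → 𝕜}

-- On a piece of diameter at most `t` the kernel is almost constant, so the sum is a Riemann sum.
lemma sum_measureReal_mul_norm_le (hμ : IsUpperRegular μ d C) (ht : 0 < t)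
    (hE : ∀ k, MeasurableSet (E k)) (hdisj : Pairwise (Disjoint on E))
    (hdiam : ∀ k, E k ⊆ closedBall (c k) t) (hψ : ∀ k, IsMolecule μ d A (c k) t (ψ k)) (x : α) :
    ∑ k, μ.real (E k) * ‖ψ k x‖ ≤ 2 ^ (2 * d + 3) * A * C := by
  let g (y : α) : ℝ := A * 2 ^ (d + 1) * decayKernel d (d + 1) t x y
  have hg : Integrable g μ := (integrable_decayKernel hμ ht x).const_mul _
  have hψg (k : κ) (y : α) (hy : y ∈ E k) : ‖ψ k x‖ ≤ g y := by
    calc ‖ψ k x‖ ≤ A * decayKernel d (d + 2) t (c k) x := (hψ k).norm_le x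
      _ ≤ A * (2 ^ (d + 1) * decayKernel d (d + 1) t y x) := by
          gcongr
          refine (decayKernel_succ_le ht).trans (decayKernel_le_of_dist_le ht ?_)
          exact mem_closedBall'.1 (hdiam k hy)
      _ = g y := by rw [decayKernel_comm, ← mul_assoc]
  have hpiece (k : κ) : μ.real (E k) * ‖ψ k x‖ ≤ ∫ y in E k, g y ∂μ := by
    have hfin : μ (E k) ≠ ∞ :=
      ((measure_mono (hdiam k)).trans (hμ (c k) t ht)).trans_lt ENNReal.ofReal_lt_top |>.ne
    calc μ.real (E k) * ‖ψ k x‖ = ∫ _ in E k, ‖ψ k x‖ ∂μ := by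
          rw [setIntegral_const, smul_eq_mul]
      _ ≤ ∫ y in E k, g y ∂μ :=
          setIntegral_mono_on (integrableOn_const hfin) hg.integrableOn (hE k) (hψg k)
  calc ∑ k, μ.real (E k) * ‖ψ k x‖ ≤ ∑ k, ∫ y in E k, g y ∂μ :=
        Finset.sum_le_sum fun k _ => hpiece k
    _ = ∫ y in ⋃ k, E k, g y ∂μ :=
        (integral_iUnion_fintype hE hdisj fun k => hg.integrableOn).symm
    _ ≤ ∫ y, g y ∂μ := by
        refine setIntegral_le_integral hg (.of_forall fun y => ?_)
        exact mul_nonneg (by positivity) (decayKernel_nonneg ht)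
    _ = A * 2 ^ (d + 1) * ∫ y, decayKernel d (d + 1) t x y ∂μ := integral_const_mul _ _
    _ ≤ A * 2 ^ (d + 1) * (2 ^ (d + 2) * C) := by gcongr; exact integral_decayKernel_le hμ ht x
    _ = 2 ^ (2 * d + 3) * A * C := by ring

lemma sum_measureReal_mul_norm_integral_mul_norm_le (hμ : IsUpperRegular μ d C) (hd : d ≠ 0)
    (ht : 0 < t) (hE : ∀ k, MeasurableSet (E k)) (hdisj : Pairwise (Disjoint on E))
    (hdiam : ∀ k, E k ⊆ closedBall (c k) t) (hφ : ∀ k, IsMolecule μ d A (c k) t (φ k))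
    (hψ : ∀ k, IsMolecule μ d A (c k) t (ψ k)) (hr : 0 < r) (hF : IsLipschitzBump K r F) (x : α) :
    ∑ k, μ.real (E k) * (‖∫ y, F y * conj (φ k y) ∂μ‖ * ‖ψ k x‖) ≤
      A * C * (2 ^ (d + 2) * K + 1) * (2 ^ (2 * d + 3) * A * C) * min (t / r) (r / t) := by
  calc ∑ k, μ.real (E k) * (‖∫ y, F y * conj (φ k y) ∂μ‖ * ‖ψ k x‖)
      ≤ ∑ k, A * C * (2 ^ (d + 2) * K + 1) * min (t / r) (r / t) * (μ.real (E k) * ‖ψ k x‖) := by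
        refine Finset.sum_le_sum fun k _ => ?_
        rw [mul_left_comm]
        gcongr
        exact (hφ k).norm_integral_mul_conj_le_min hμ hd ht hr hF
    _ = A * C * (2 ^ (d + 2) * K + 1) * min (t / r) (r / t) * ∑ k, μ.real (E k) * ‖ψ k x‖ :=
        (Finset.mul_sum ..).symm
    _ ≤ A * C * (2 ^ (d + 2) * K + 1) * min (t / r) (r / t) * (2 ^ (2 * d + 3) * A * C) := by
        gcongr
        exact sum_measureReal_mul_norm_le hμ ht hE hdisj hdiam hψ x
    _ = _ := by ring

end Partition

theorem exists_tsum_molecules_le_and_tendstoUniformly (hμ : IsUpperRegular μ d C) (hd : d ≠ 0)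
    (A K : ℝ≥0) {a : ℝ} (ha : 1 < a) :
    ∃ C₁ : ℝ, 0 < C₁ ∧ ∀ (κ : ℤ → Type*) [∀ j, Fintype (κ j)] (E : ∀ j, κ j → Set α)
      (c : ∀ j, κ j → α) (φ ψ : ∀ j, κ j → α → 𝕜) (r : ℝ) (F : α → 𝕜),
      (∀ j k, MeasurableSet (E j k)) → (∀ j, Pairwise (Disjoint on E j)) →
      (∀ j k, E j k ⊆ closedBall (c j k) (a ^ j)) →
      (∀ j k, IsMolecule μ d A (c j k) (a ^ j) (φ j k)) →
      (∀ j k, IsMolecule μ d A (c j k) (a ^ j) (ψ j k)) →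
      0 < r → IsLipschitzBump K r F →
      let term (p : Σ j, κ j) (x : α) : ℝ :=
        μ.real (E p.1 p.2) * (‖∫ y, F y * conj (φ p.1 p.2 y) ∂μ‖ * ‖ψ p.1 p.2 x‖)
      (∀ x, Summable (term · x) ∧ ∑' p, term p x ≤ C₁) ∧
        TendstoUniformly (fun s x => ∑ p ∈ s, term p x) (fun x => ∑' p, term p x) atTop := by
  obtain ⟨S, hS₀, hS⟩ := exists_tsum_min_zpow_div_le ha
  let D : ℝ := A * C * (2 ^ (d + 2) * K + 1) * (2 ^ (2 * d + 3) * A * C)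
  refine ⟨D * S + 1, by positivity, ?_⟩
  intro κ _ E c φ ψ r F hE hdisj hdiam hφ hψ hr hF term
  have hterm (p : Σ j, κ j) (x : α) : 0 ≤ term p x := by positivity
  have hscale (j : ℤ) (x : α) : ∑ k, term ⟨j, k⟩ x ≤ D * min (a ^ j / r) (r / a ^ j) :=
    sum_measureReal_mul_norm_integral_mul_norm_le hμ hd (zpow_pos (zero_lt_one.trans ha) j) (hE j)
      (hdisj j) (hdiam j) (hφ j) (hψ j) hr hF x
  obtain ⟨hsum, hle⟩ := hS r hr
  have hD := hsum.mul_left D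
  refine ⟨fun x => ⟨summable_sigma_of_sum_le (hterm · x) hD (hscale · x), ?_⟩,
    tendstoUniformly_sum_sigma hterm hD hscale⟩
  calc ∑' p, term p x ≤ ∑' j : ℤ, D * min (a ^ j / r) (r / a ^ j) :=
        tsum_sigma_le_of_sum_le (hterm · x) hD (hscale · x)
    _ = D * ∑' j : ℤ, min (a ^ j / r) (r / a ^ j) := tsum_mul_left
    _ ≤ D * S + 1 := by
        have : D * ∑' j : ℤ, min (a ^ j / r) (r / a ^ j) ≤ D * S := by gcongr
        linarith

end MetricMeasure

section CapMeasure

open scoped Pointwise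

variable {E : Type*} [NormedAddCommGroup E] [NormedSpace ℝ E]

lemma smul_Ioo_smul_closedBall_subset {s : ℝ} (hs : 0 < s) (x : sphere (0 : E) 1) :
    (1 + s) • (Set.Ioo (0 : ℝ) 1 • (Subtype.val '' closedBall x s)) ⊆
      Set.Ioo (0 : ℝ) 1 • (Subtype.val '' closedBall x s) ∪ closedBall (x : E) (2 * s) := by
  rintro _ ⟨_, ⟨u, ⟨hu₀, hu₁⟩, _, ⟨y, hy, rfl⟩, rfl⟩, rfl⟩
  have hpos : 0 < (1 + s) * u := by positivity
  simp only [smul_smul]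
  rcases lt_or_ge ((1 + s) * u) 1 with hlt | hge
  · exact .inl (Set.smul_mem_smul ⟨hpos, hlt⟩ (Set.mem_image_of_mem _ hy))
  · refine .inr (mem_closedBall_iff_norm.2 ?_)
    have hu : (1 + s) * u - 1 ≤ s := by nlinarith
    calc ‖((1 + s) * u) • (y : E) - x‖ = ‖((1 + s) * u - 1) • (y : E) + (y - x)‖ := by
          rw [sub_smul, one_smul, sub_add_sub_cancel]
      _ ≤ ((1 + s) * u - 1) + dist y x := by
          grw [norm_add_le, norm_smul, norm_eq_of_mem_sphere, mul_one,
            Real.norm_of_nonneg (sub_nonneg.2 hge), Subtype.dist_eq, dist_eq_norm]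
      _ ≤ 2 * s := by linarith [mem_closedBall.1 hy]

variable [FiniteDimensional ℝ E] [MeasurableSpace E] [BorelSpace E] (μ : Measure E)
  [μ.IsAddHaarMeasure]

-- Dilating the cone over the cap by `1 + s` adds to it only points close to `x`.
lemma ofReal_mul_toSphere_closedBall_le {s : ℝ} (hs : 0 < s) (x : sphere (0 : E) 1) :
    ENNReal.ofReal s * μ.toSphere (closedBall x s) ≤ μ (closedBall (x : E) (2 * s)) := by
  set cone : Set E := Set.Ioo (0 : ℝ) 1 • (Subtype.val '' closedBall x s)
  set d := Module.finrank ℝ E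
  have hfin : μ cone ≠ ∞ := by
    refine ne_top_of_le_ne_top (measure_ball_lt_top (x := (0 : E)) (r := 1)).ne (measure_mono ?_)
    rintro _ ⟨u, hu, _, ⟨y, -, rfl⟩, rfl⟩
    simpa [norm_smul, abs_of_pos hu.1] using hu.2
  have hdilate : μ cone + ENNReal.ofReal (d * s) * μ cone ≤
      μ cone + μ (closedBall (x : E) (2 * s)) := by
    calc μ cone + ENNReal.ofReal (d * s) * μ cone = ENNReal.ofReal (1 + d * s) * μ cone := by
          rw [ENNReal.ofReal_add zero_le_one (by positivity), ENNReal.ofReal_one, add_mul, one_mul]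
      _ ≤ ENNReal.ofReal ((1 + s) ^ d) * μ cone := by
          gcongr
          exact one_add_mul_le_pow (by linarith) d
      _ = μ ((1 + s) • cone) := (μ.addHaar_smul_of_nonneg (by positivity) cone).symm
      _ ≤ μ cone + μ (closedBall (x : E) (2 * s)) :=
          (measure_mono (smul_Ioo_smul_closedBall_subset hs x)).trans (measure_union_le _ _)
  calc ENNReal.ofReal s * μ.toSphere (closedBall x s) = ENNReal.ofReal (d * s) * μ cone := by
        rw [μ.toSphere_apply' measurableSet_closedBall, ENNReal.ofReal_mul (by positivity),
          ENNReal.ofReal_natCast, mul_left_comm, mul_assoc]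
    _ ≤ μ (closedBall (x : E) (2 * s)) := (ENNReal.add_le_add_iff_left hfin).1 hdilate

lemma isUpperRegular_toSphere {n : ℕ} (hn : Module.finrank ℝ E = n + 1) :
    IsUpperRegular μ.toSphere n (2 ^ (n + 1) * (μ (ball 0 1)).toNNReal) := by
  intro x s hs
  have hball : μ (ball 0 1) = ENNReal.ofReal (μ (ball 0 1)).toNNReal := by
    rw [ENNReal.ofReal_coe_nnreal, ENNReal.coe_toNNReal measure_ball_lt_top.ne]
  refine (ENNReal.mul_le_mul_iff_right (ENNReal.ofReal_pos.2 hs).ne' ENNReal.ofReal_ne_top).1 ?_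
  calc ENNReal.ofReal s * μ.toSphere (closedBall x s) ≤ μ (closedBall (x : E) (2 * s)) :=
        ofReal_mul_toSphere_closedBall_le μ hs x
    _ = ENNReal.ofReal ((2 * s) ^ (n + 1)) * ENNReal.ofReal (μ (ball 0 1)).toNNReal := by
        rw [μ.addHaar_closedBall _ (by positivity), hn, ← hball]
    _ = ENNReal.ofReal s *
        ENNReal.ofReal ((2 ^ (n + 1) * (μ (ball 0 1)).toNNReal : ℝ≥0) * s ^ n) := by
        rw [← ENNReal.ofReal_mul (by positivity), ← ENNReal.ofReal_mul (by positivity)]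
        push_cast
        ring_nf

end CapMeasure

section Angle

open InnerProductGeometry

variable {V : Type*} [NormedAddCommGroup V] [InnerProductSpace ℝ V] {x y : V}

lemma norm_sub_sq_eq_two_sub_two_mul_cos_angle (hx : ‖x‖ = 1) (hy : ‖y‖ = 1) :
    ‖x - y‖ ^ 2 = 2 - 2 * Real.cos (angle x y) := by
  rw [norm_sub_sq_real, inner_eq_cos_angle_of_norm_eq_one hx hy, hx, hy]
  ring

lemma norm_sub_le_angle (hx : ‖x‖ = 1) (hy : ‖y‖ = 1) : ‖x - y‖ ≤ angle x y := by
  refine le_of_sq_le_sq ?_ (angle_nonneg x y)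
  rw [norm_sub_sq_eq_two_sub_two_mul_cos_angle hx hy]
  linarith [Real.one_sub_sq_div_two_le_cos (x := angle x y)]

lemma angle_le_pi_div_two_mul_norm_sub (hx : ‖x‖ = 1) (hy : ‖y‖ = 1) :
    angle x y ≤ Real.pi / 2 * ‖x - y‖ := by
  have hangle : |angle x y| ≤ Real.pi := by
    rw [abs_of_nonneg (angle_nonneg x y)]
    exact angle_le_pi x y
  have hcos := Real.cos_le_one_sub_mul_cos_sq hangle
  refine le_of_sq_le_sq ?_ (by positivity)
  calc angle x y ^ 2 = (Real.pi / 2) ^ 2 * (2 * (2 / Real.pi ^ 2 * angle x y ^ 2)) := by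
        field_simp
    _ ≤ (Real.pi / 2 * ‖x - y‖) ^ 2 := by
        rw [mul_pow, norm_sub_sq_eq_two_sub_two_mul_cos_angle hx hy]
        gcongr
        linarith

end Angle

section Frame

variable {M 𝕜 E W ι : Type*} [TopologicalSpace M] [NontriviallyNormedField 𝕜] [CompleteSpace 𝕜]
  [NormedAddCommGroup E] [NormedSpace 𝕜 E] [FiniteDimensional 𝕜 E] [NormedAddCommGroup W]
  [NormedSpace 𝕜 W] {Y : ι → M → E}

-- Near `x₀` some `Y i` are small perturbations of a basis, whose error `‖L‖ / 2` is absorbed.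
variable (W) in
lemma exists_eventually_opNorm_le_of_span_eq_top {x₀ : M} (hY : ∀ i, ContinuousAt (Y i) x₀)
    (hspan : Submodule.span 𝕜 (Set.range fun i => Y i x₀) = ⊤) :
    ∃ K : ℝ≥0, ∀ᶠ x in 𝓝 x₀, ∀ (L : E →L[𝕜] W) (B : ℝ), 0 ≤ B → (∀ i, ‖L (Y i x)‖ ≤ B) →
      ‖L‖ ≤ K * B := by
  let b := Module.Basis.ofSpan hspan.ge
  have := Module.Finite.finite_basis b
  obtain ⟨C, hC, hLC⟩ := b.exists_opNorm_le (F := W)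
  choose i hi using fun k => Module.Basis.ofSpan_subset hspan.ge (Set.mem_range_self k)
  have hclose : ∀ᶠ x in 𝓝 x₀, ∀ k, ‖b k - Y (i k) x‖ < (2 * C)⁻¹ := by
    refine eventually_all.2 fun k => ?_
    simp only [← hi, b, ← dist_eq_norm']
    exact (hY (i k)).eventually (ball_mem_nhds _ (by positivity))
  refine ⟨(2 * C).toNNReal, hclose.mono fun x hx L B hB hL => ?_⟩
  have hbasis (k) : ‖L (b k)‖ ≤ B + ‖L‖ * (2 * C)⁻¹ := by
    calc ‖L (b k)‖ = ‖L (Y (i k) x) + L (b k - Y (i k) x)‖ := by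
          rw [← map_add, add_sub_cancel]
      _ ≤ B + ‖L‖ * (2 * C)⁻¹ := by
          grw [norm_add_le, hL, L.le_opNorm, hx k]
  have hhalf : ‖L‖ ≤ C * B + ‖L‖ / 2 :=
    (hLC (by positivity) hbasis).trans_eq (by field_simp)
  rw [Real.coe_toNNReal _ (by positivity)]
  linarith

variable (W) in
lemma exists_opNorm_le_of_span_eq_top [CompactSpace M] (hY : ∀ i, Continuous (Y i))
    (hspan : ∀ x, Submodule.span 𝕜 (Set.range fun i => Y i x) = ⊤) :
    ∃ K : ℝ≥0, ∀ (x : M) (L : E →L[𝕜] W) (B : ℝ), 0 ≤ B → (∀ i, ‖L (Y i x)‖ ≤ B) →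
      ‖L‖ ≤ K * B := by
  suffices ∃ K : ℝ≥0, ∀ x ∈ Set.univ, ∀ (L : E →L[𝕜] W) (B : ℝ), 0 ≤ B →
      (∀ i, ‖L (Y i x)‖ ≤ B) → ‖L‖ ≤ K * B by simpa using this
  refine isCompact_univ.induction_on ⟨0, by simp⟩ ?_ ?_ ?_
  · rintro s t hst ⟨K, hK⟩
    exact ⟨K, fun x hx => hK x (hst hx)⟩
  · rintro s t ⟨K, hK⟩ ⟨K', hK'⟩
    refine ⟨max K K', fun x hx L B hB hL => ?_⟩
    rcases hx with hx | hx
    · exact (hK x hx L B hB hL).trans (by gcongr; exact le_max_left K K')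
    · exact (hK' x hx L B hB hL).trans (by gcongr; exact le_max_right K K')
  · intro x _
    obtain ⟨K, hK⟩ :=
      exists_eventually_opNorm_le_of_span_eq_top W (fun i => (hY i).continuousAt) (hspan x)
    exact ⟨_, mem_nhdsWithin_of_mem_nhds hK, K, fun _ h => h⟩

end Frame

section GreatArc

open InnerProductGeometry

variable {E : Type*} [NormedAddCommGroup E] [InnerProductSpace ℝ E]

/-- The unit-speed great circle through `y` in the direction `e`, for orthonormal `y` and `e`. -/
def greatArc (y e : E) (θ : ℝ) : E :=
  Real.cos θ • y + Real.sin θ • e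

variable {y z e : E}

lemma norm_greatArc (hy : ‖y‖ = 1) (he : ‖e‖ = 1) (hye : ⟪y, e⟫ = 0) (θ : ℝ) :
    ‖greatArc y e θ‖ = 1 := by
  have horth : ⟪Real.cos θ • y, Real.sin θ • e⟫ = 0 := by
    rw [real_inner_smul_left, real_inner_smul_right, hye, mul_zero, mul_zero]
  rw [← sq_eq_sq₀ (norm_nonneg _) zero_le_one, sq, greatArc,
    norm_add_sq_eq_norm_sq_add_norm_sq_of_inner_eq_zero _ _ horth, norm_smul, norm_smul, hy, he]
  simp [← sq]

lemma contDiff_greatArc (y e : E) : ContDiff ℝ 1 (greatArc y e) :=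
  (Real.contDiff_cos.smul contDiff_const).add (Real.contDiff_sin.smul contDiff_const)

lemma hasDerivAt_greatArc (y e : E) (θ : ℝ) :
    HasDerivAt (greatArc y e) (greatArc y e (θ + Real.pi / 2)) θ := by
  rw [greatArc, Real.cos_add_pi_div_two, Real.sin_add_pi_div_two]
  exact ((Real.hasDerivAt_cos θ).smul_const y).add ((Real.hasDerivAt_sin θ).smul_const e)

lemma exists_norm_eq_one_and_eq_norm_smul {V : Type*} [NormedAddCommGroup V] [NormedSpace ℝ V]
    [Nontrivial V] (w : V) : ∃ e : V, ‖e‖ = 1 ∧ w = ‖w‖ • e := by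
  rcases eq_or_ne w 0 with rfl | hw
  · obtain ⟨e, he⟩ := exists_norm_eq V zero_le_one
    exact ⟨e, he, by rw [norm_zero, zero_smul]⟩
  · exact ⟨‖w‖⁻¹ • w, norm_smul_inv_norm hw, (smul_inv_smul₀ (norm_ne_zero_iff.2 hw) w).symm⟩

lemma exists_eq_greatArc_angle [Nontrivial (ℝ ∙ y)ᗮ] (hy : ‖y‖ = 1) (hz : ‖z‖ = 1) :
    ∃ e : E, ‖e‖ = 1 ∧ ⟪y, e⟫ = 0 ∧ greatArc y e (angle y z) = z := by
  set θ := angle y z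
  have hcos : ⟪y, z⟫ = Real.cos θ :=
    inner_eq_cos_angle_of_norm_eq_one hy hz
  set w : E := z - Real.cos θ • y with hw
  have hyw : w ∈ (ℝ ∙ y)ᗮ := by
    rw [Submodule.mem_orthogonal_singleton_iff_inner_right, hw, inner_sub_right,
      real_inner_smul_right, real_inner_self_eq_norm_sq, hy, hcos]
    ring
  have hnorm : ‖w‖ = Real.sin θ := by
    rw [← sq_eq_sq₀ (norm_nonneg _) (sin_angle_nonneg y z), hw,
      norm_sub_sq_real, norm_smul, hy, hz, real_inner_smul_right, real_inner_comm, hcos,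
      Real.sin_sq, Real.norm_eq_abs, mul_one, sq_abs]
    ring
  obtain ⟨e, he, hwe⟩ := exists_norm_eq_one_and_eq_norm_smul (⟨w, hyw⟩ : (ℝ ∙ y)ᗮ)
  refine ⟨e, he, Submodule.mem_orthogonal_singleton_iff_inner_right.1 e.2, ?_⟩
  have hsin : w = Real.sin θ • (e : E) := hnorm ▸ congrArg Subtype.val hwe
  rw [greatArc, ← hsin, hw, add_sub_cancel]

end GreatArc

section Curve

variable {V W H M : Type*} [NormedAddCommGroup V] [NormedSpace ℝ V] [TopologicalSpace H]
  {I : ModelWithCorners ℝ V H} [TopologicalSpace M] [ChartedSpace H M] [NormedAddCommGroup W]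
  [NormedSpace ℝ W]

lemma hasDerivAt_comp_of_mdifferentiableAt {f : M → W} {γ : ℝ → M} {θ : ℝ}
    (hf : MDifferentiableAt I 𝓘(ℝ, W) f (γ θ)) (hγ : MDifferentiableAt 𝓘(ℝ, ℝ) I γ θ) :
    HasDerivAt (f ∘ γ) (mvfderiv I f (γ θ) (mfderiv 𝓘(ℝ, ℝ) I γ θ (1 : ℝ))) θ :=
  HasFDerivAt.hasDerivAt (𝕜 := ℝ) (F := W)
    (hf.hasMFDerivAt.comp θ hγ.hasMFDerivAt).hasFDerivAt

end Curve

section Sphere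

open InnerProductGeometry

variable {E W ι : Type*} [NormedAddCommGroup E] [InnerProductSpace ℝ E] {n : ℕ}
  [Fact (Module.finrank ℝ E = n + 1)] [NormedAddCommGroup W] [NormedSpace ℝ W]

local notation "incl" => (Subtype.val : sphere (0 : E) 1 → E)

lemma continuous_mvfderiv_subtypeVal {X : (x : sphere (0 : E) 1) → TangentSpace (𝓡 n) x}
    (hX : Continuous fun x => (⟨x, X x⟩ : TangentBundle (𝓡 n) (sphere (0 : E) 1))) :
    Continuous fun x => mvfderiv (𝓡 n) incl x (X x) := by
  have hincl : ContMDiff (𝓡 n) 𝓘(ℝ, E) 1 incl := contMDiff_coe_sphere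
  have hsnd := (contMDiff_snd_tangentBundle_modelSpace (n := 0) E 𝓘(ℝ, E)).continuous
  exact hsnd.comp ((hincl.continuous_tangentMap le_rfl).comp hX)

lemma exists_extension_mvfderiv_subtypeVal (x : sphere (0 : E) 1)
    (L : TangentSpace (𝓡 n) x →L[ℝ] W) :
    ∃ L' : E →L[ℝ] W, L' x = 0 ∧ ∀ v, L' (mvfderiv (𝓡 n) incl x v) = L v := by
  have : FiniteDimensional ℝ E := .of_fact_finrank_eq_succ n
  obtain ⟨g, hg⟩ := LinearMap.exists_leftInverse_of_injective
    (mvfderiv (𝓡 n) incl x).toLinearMap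
    (LinearMap.ker_eq_bot.2 (injective_mvfderiv_subtypeVal_sphere x))
  let P : E →L[ℝ] E := (ℝ ∙ (x : E))ᗮ.starProjection
  refine ⟨L ∘L g.toContinuousLinearMap ∘L P, ?_, fun v => ?_⟩
  · have hPx : P x = 0 := Submodule.starProjection_orthogonal_apply_eq_zero
      (Submodule.mem_span_singleton_self _)
    simp [hPx]
  · have hmem : mvfderiv (𝓡 n) incl x v ∈ (ℝ ∙ (x : E))ᗮ :=
      range_mvfderiv_subtypeVal (n := n) x ▸ LinearMap.mem_range_self _ v
    have hPv : P (mvfderiv (𝓡 n) incl x v) = mvfderiv (𝓡 n) incl x v :=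
      Submodule.starProjection_eq_self_iff.2 hmem
    have hgv : g (mvfderiv (𝓡 n) incl x v) = v := LinearMap.congr_fun hg v
    simp [hPv, hgv]

variable {X : ι → (x : sphere (0 : E) 1) → TangentSpace (𝓡 n) x}

lemma span_range_option_elim_mvfderiv_eq_top {x : sphere (0 : E) 1}
    (hX : Submodule.span ℝ (Set.range fun i => X i x) = ⊤) :
    Submodule.span ℝ (Set.range fun o : Option ι =>
      o.elim (x : E) fun i => mvfderiv (𝓡 n) incl x (X i x)) = ⊤ := by
  have : FiniteDimensional ℝ E := .of_fact_finrank_eq_succ n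
  have htangent : Submodule.span ℝ (Set.range fun i => mvfderiv (𝓡 n) incl x (X i x)) =
      (ℝ ∙ (x : E))ᗮ := by
    rw [← range_mvfderiv_subtypeVal (n := n) x, LinearMap.range_eq_map, ← hX,
      Submodule.map_span, ← Set.range_comp]
    rfl
  rw [Option.range_elim, Submodule.span_insert, htangent]
  exact Submodule.sup_orthogonal_of_hasOrthogonalProjection

variable (W) in
lemma exists_norm_le_mul_norm_mvfderiv_subtypeVal
    (hX : ∀ i, Continuous fun x => (⟨x, X i x⟩ : TangentBundle (𝓡 n) (sphere (0 : E) 1)))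
    (hspan : ∀ x, Submodule.span ℝ (Set.range fun i => X i x) = ⊤) :
    ∃ K : ℝ≥0, ∀ (x : sphere (0 : E) 1) (L : TangentSpace (𝓡 n) x →L[ℝ] W) (B : ℝ), 0 ≤ B →
      (∀ i, ‖L (X i x)‖ ≤ B) → ∀ v, ‖L v‖ ≤ K * B * ‖mvfderiv (𝓡 n) incl x v‖ := by
  have : FiniteDimensional ℝ E := .of_fact_finrank_eq_succ n
  have : ProperSpace E := FiniteDimensional.proper ℝ E
  let Y (o : Option ι) (x : sphere (0 : E) 1) : E :=
    o.elim (x : E) fun i => mvfderiv (𝓡 n) incl x (X i x)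
  have hY (o : Option ι) : Continuous (Y o) := by
    cases o with
    | none => exact continuous_subtype_val
    | some i => exact continuous_mvfderiv_subtypeVal (hX i)
  obtain ⟨K, hK⟩ := exists_opNorm_le_of_span_eq_top W hY fun x =>
    span_range_option_elim_mvfderiv_eq_top (hspan x)
  refine ⟨K, fun x L B hB hL v => ?_⟩
  obtain ⟨L', hL'x, hL'⟩ := exists_extension_mvfderiv_subtypeVal x L
  have hL'Y (o : Option ι) : ‖L' (Y o x)‖ ≤ B := by
    cases o with
    | none => simpa [Y, hL'x] using hB
    | some i => simpa [Y, hL'] using hL i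
  rw [← hL' v]
  exact (L'.le_opNorm _).trans (by gcongr; exact hK x L' B hB hL'Y)

lemma nontrivial_orthogonal_span_singleton (hn : n ≠ 0) {y : E} (hy : y ≠ 0) :
    Nontrivial (ℝ ∙ y)ᗮ := by
  have : FiniteDimensional ℝ E := .of_fact_finrank_eq_succ n
  apply Module.nontrivial_of_finrank_pos (R := ℝ)
  rw [Submodule.finrank_orthogonal_span_singleton (n := n) hy]
  exact Nat.pos_of_ne_zero hn

lemma norm_sub_le_mul_angle_of_norm_mvfderiv_le (hn : n ≠ 0) {F : sphere (0 : E) 1 → W}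
    (hF : MDifferentiable (𝓡 n) 𝓘(ℝ, W) F) {B : ℝ}
    (hB : ∀ x v, ‖mvfderiv (𝓡 n) F x v‖ ≤ B * ‖mvfderiv (𝓡 n) incl x v‖)
    (y z : sphere (0 : E) 1) :
    ‖F z - F y‖ ≤ B * angle (y : E) z := by
  have := nontrivial_orthogonal_span_singleton hn (ne_zero_of_mem_unit_sphere y)
  have hy : ‖(y : E)‖ = 1 := norm_eq_of_mem_sphere y
  obtain ⟨e, he, hye, hz⟩ := exists_eq_greatArc_angle hy (norm_eq_of_mem_sphere z)
  have hmem (θ : ℝ) : greatArc (y : E) e θ ∈ sphere (0 : E) 1 :=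
    mem_sphere_zero_iff_norm.2 (norm_greatArc hy he hye θ)
  let γ : ℝ → sphere (0 : E) 1 := Set.codRestrict (greatArc (y : E) e) _ hmem
  have hγ : MDifferentiable 𝓘(ℝ, ℝ) (𝓡 n) γ :=
    ((contDiff_greatArc _ e).contMDiff.codRestrict_sphere hmem).mdifferentiable one_ne_zero
  have hincl : MDifferentiable (𝓡 n) 𝓘(ℝ, E) incl :=
    contMDiff_coe_sphere.mdifferentiable one_ne_zero
  let γ' (θ : ℝ) : TangentSpace (𝓡 n) (γ θ) := mfderiv 𝓘(ℝ, ℝ) (𝓡 n) γ θ (1 : ℝ)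
  have hspeed (θ : ℝ) : ‖mvfderiv (𝓡 n) incl (γ θ) (γ' θ)‖ = 1 := by
    rw [(hasDerivAt_comp_of_mdifferentiableAt (hincl (γ θ)) (hγ θ)).unique
      (hasDerivAt_greatArc (y : E) e θ), norm_greatArc hy he hye]
  have hbound (θ : ℝ) : ‖mvfderiv (𝓡 n) F (γ θ) (γ' θ)‖ ≤ B := by
    simpa only [hspeed, mul_one] using hB (γ θ) (γ' θ)
  have hmean := convex_univ.norm_image_sub_le_of_norm_hasDerivWithin_le (f := F ∘ γ)
    (fun θ _ => (hasDerivAt_comp_of_mdifferentiableAt (hF (γ θ)) (hγ θ)).hasDerivWithinAt)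
    (fun θ _ => hbound θ) (Set.mem_univ 0)
    (Set.mem_univ (angle (y : E) z))
  have hγ₀ : γ 0 = y := Subtype.ext (by simp [γ, greatArc])
  have hγ₁ : γ (angle (y : E) z) = z := Subtype.ext hz
  simpa only [comp_apply, hγ₀, hγ₁, sub_zero, Real.norm_of_nonneg
    (angle_nonneg (y : E) z)] using hmean

end Sphere

section TwoSphere

lemma gdist_eq_angle (x y : Sph) : gdist x y = InnerProductGeometry.angle (x : E3) y := by
  rw [gdist, InnerProductGeometry.angle, norm_eq_of_mem_sphere, norm_eq_of_mem_sphere, mul_one,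
    div_one]

lemma dist_le_gdist (x y : Sph) : dist x y ≤ gdist x y := by
  rw [gdist_eq_angle, Subtype.dist_eq, dist_eq_norm]
  exact norm_sub_le_angle (norm_eq_of_mem_sphere x) (norm_eq_of_mem_sphere y)

lemma gdist_le_pi_div_two_mul_dist (x y : Sph) : gdist x y ≤ Real.pi / 2 * dist x y := by
  rw [gdist_eq_angle, Subtype.dist_eq, dist_eq_norm]
  exact angle_le_pi_div_two_mul_norm_sub (norm_eq_of_mem_sphere x) (norm_eq_of_mem_sphere y)

lemma integrable_sphMeasure_of_continuous {φ : Sph → ℂ} (hφ : Continuous φ) :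
    Integrable φ sphMeasure := by
  have : IsFiniteMeasure sphMeasure :=
    inferInstanceAs (IsFiniteMeasure (volume : Measure E3).toSphere)
  exact hφ.integrable_of_hasCompactSupport (.of_compactSpace φ)

variable {ι : Type*} {X : ι → (x : Sph) → TangentSpace (𝓡 2) x}

lemma isMolecule_of_mem_MClass {x : Sph} {t : ℝ} (ht : 0 < t) {φ : Sph → ℂ}
    (hφ : φ ∈ MClass X x t) : IsMolecule sphMeasure 2 16 x t φ := by
  obtain ⟨hsmooth, hzero, hdecay, -⟩ := hφ
  refine ⟨integrable_sphMeasure_of_continuous hsmooth.continuous, hzero, fun y => ?_⟩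
  have hpow : (1 + dist x y / t) ^ 4 ≤ 8 * (1 + (gdist x y / t) ^ 4) := by
    calc (1 + dist x y / t) ^ 4 ≤ 2 ^ (4 - 1) * (1 ^ 4 + (dist x y / t) ^ 4) :=
          add_pow_le zero_le_one (by positivity) 4
      _ ≤ 8 * (1 + (gdist x y / t) ^ 4) := by
          norm_num
          gcongr
          exact dist_le_gdist x y
  have hbound : ‖φ y‖ * (t ^ 2 * (1 + dist x y / t) ^ 4) ≤ 16 := by
    calc ‖φ y‖ * (t ^ 2 * (1 + dist x y / t) ^ 4)
        ≤ ‖φ y‖ * (t ^ 2 * (8 * (1 + (gdist x y / t) ^ 4))) := by gcongr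
      _ = 8 * (t ^ 2 * ((gdist x y / t) ^ 0 * ‖φ y‖) +
          t ^ 2 * ((gdist x y / t) ^ 4 * ‖φ y‖)) := by ring
      _ ≤ 16 := by linarith [hdecay y 0 (by norm_num), hdecay y 4 le_rfl]
  rw [decayKernel, ← div_eq_mul_inv, le_div_iff₀ (by positivity)]
  exact hbound

lemma exists_isLipschitzBump_of_isSphBump
    (hX : ∀ i, Continuous fun x => (⟨x, X i x⟩ : TangentBundle (𝓡 2) Sph))
    (hspan : ∀ x, Submodule.span ℝ (Set.range fun i => X i x) = ⊤) :
    ∃ K : ℝ≥0, ∀ r : ℝ, 0 < r → ∀ F : Sph → ℂ, IsSphBump X r F → IsLipschitzBump K r F := by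
  obtain ⟨K, hK⟩ := exists_norm_le_mul_norm_mvfderiv_subtypeVal ℂ hX hspan
  refine ⟨K * (NNReal.pi / 2), fun r hr F ⟨hsmooth, ⟨p, hp⟩, hle, hderiv⟩ => ⟨⟨p, ?_⟩, hle, ?_⟩⟩
  · intro y hy
    rw [mem_closedBall']
    exact (dist_le_gdist p y).trans (hp (subset_tsupport F hy)).le
  · refine LipschitzWith.of_dist_le_mul fun y z => ?_
    rw [dist_comm, dist_eq_norm]
    calc ‖F z - F y‖ ≤ K * (1 / r) * gdist y z := by
          rw [gdist_eq_angle]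
          exact norm_sub_le_mul_angle_of_norm_mvfderiv_le two_ne_zero
            (hsmooth.mdifferentiable one_ne_zero)
            (fun x v => hK x _ _ (by positivity) (fun i => hderiv i x) v) y z
      _ ≤ K * (1 / r) * (Real.pi / 2 * dist y z) := by
          gcongr; exact gdist_le_pi_div_two_mul_dist y z
      _ = (K * (NNReal.pi / 2) / r.toNNReal : ℝ≥0) * dist y z := by
          push_cast [Real.coe_toNNReal r hr.le, NNReal.coe_real_pi]; ring

end TwoSphere

theorem statement_16_general
    (ι : Type*) (X : ι → (x : Sph) → TangentSpace (𝓡 2) x)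
    (hX : ∀ i, Continuous fun x => (⟨x, X i x⟩ : TangentBundle (𝓡 2) Sph))
    (hXspan : ∀ x : Sph, Submodule.span ℝ (Set.range fun i => X i x) = ⊤)
    (a : ℝ) (ha : 1 < a) :
    ∃ C₁ : ℝ, 0 < C₁ ∧
      ∀ (N : ℤ → ℕ) (E : (j : ℤ) → Fin (N j) → Set Sph),
        (∀ j k, MeasurableSet (E j k)) →
        (∀ j, Pairwise fun k k' => Disjoint (E j k) (E j k')) →
        (∀ j k, ∀ y ∈ E j k, ∀ z ∈ E j k, gdist y z < a ^ j) →
        ∀ (xp : (j : ℤ) → Fin (N j) → Sph), (∀ j k, xp j k ∈ E j k) →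
        ∀ (φ ψ : (j : ℤ) → Fin (N j) → (Sph → ℂ)),
          (∀ j k, φ j k ∈ MClass X (xp j k) (a ^ j)) →
          (∀ j k, ψ j k ∈ MClass X (xp j k) (a ^ j)) →
        ∀ r : ℝ, 0 < r → ∀ F : Sph → ℂ, IsSphBump X r F →
          let term (p : (j : ℤ) × Fin (N j)) (x : Sph) : ℝ :=
            sphMeasure.real (E p.1 p.2) * (‖sphInner F (φ p.1 p.2)‖ * ‖ψ p.1 p.2 x‖)
          (∀ x, Summable (term · x) ∧ ∑' p, term p x ≤ C₁) ∧
            TendstoUniformly (fun s x => ∑ p ∈ s, term p x) (fun x => ∑' p, term p x) atTop := by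
  obtain ⟨K, hK⟩ := exists_isLipschitzBump_of_isSphBump hX hXspan
  have hμ := isUpperRegular_toSphere (volume : Measure E3) (n := 2) Fact.out
  obtain ⟨C₁, hC₁, hmain⟩ :=
    exists_tsum_molecules_le_and_tendstoUniformly (𝕜 := ℂ) hμ two_ne_zero 16 K ha
  refine ⟨C₁, hC₁, fun N E hE hdisj hdiam xp hxp φ ψ hφ hψ r hr F hF => ?_⟩
  have ht (j : ℤ) : 0 < a ^ j := zpow_pos (zero_lt_one.trans ha) j
  have hball (j : ℤ) (k : Fin (N j)) : E j k ⊆ closedBall (xp j k) (a ^ j) := fun y hy =>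
    mem_closedBall.2 ((dist_le_gdist y _).trans (hdiam j k y hy _ (hxp j k)).le)
  exact hmain (fun j => Fin (N j)) E xp φ ψ r F hE hdisj hball
    (fun j k => isMolecule_of_mem_MClass (ht j) (hφ j k))
    (fun j k => isMolecule_of_mem_MClass (ht j) (hψ j k)) hr (hK r hr F hF)

/-- **Uniform summation bound for wavelet coefficients of bump functions.**
Fix `𝒫 = {X i}` smooth vector fields on `S²` spanning the tangent space at each point
and `a > 1`.  There is `C₁ > 0` such that: for any partitions `{E_{j,k}}` of `S²` into
finitely many measurable pieces of geodesic diameter `< a^j`, points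
`x_{j,k} ∈ E_{j,k}`, functions `φ_{j,k}, ψ_{j,k} ∈ ℳ_{x_{j,k},a^j}`, and any `r`-bump
function `F` with `0 < r ≤ π/10`, for every `x ∈ S²`:
`∑_{j,k} μ(E_{j,k}) |⟨F,φ_{j,k}⟩| |ψ_{j,k}(x)| ≤ C₁`, the series converging uniformly
in `x`; `C₁` is independent of all the choices made. -/
theorem statement_16
    (ι : Type*) [Fintype ι] (X : ι → (x : Sph) → TangentSpace (𝓡 2) x)
    (hXsmooth : ∀ i, ContMDiff (𝓡 2) (𝓡 2).tangent (⊤ : ℕ∞)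
      (fun x => (⟨x, X i x⟩ : TangentBundle (𝓡 2) Sph)))
    (hXspan : ∀ x : Sph, Submodule.span ℝ (Set.range fun i => X i x) = ⊤)
    (a : ℝ) (ha : 1 < a) :
    ∃ C₁ : ℝ, 0 < C₁ ∧
      ∀ (N : ℤ → ℕ) (E : (j : ℤ) → Fin (N j) → Set Sph),
        (∀ j k, MeasurableSet (E j k)) →
        (∀ j, Pairwise fun k k' => Disjoint (E j k) (E j k')) →
        (∀ j, (⋃ k, E j k) = Set.univ) →
        (∀ j k, ∀ y ∈ E j k, ∀ z ∈ E j k, gdist y z < a ^ j) →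
        ∀ (xp : (j : ℤ) → Fin (N j) → Sph), (∀ j k, xp j k ∈ E j k) →
        ∀ (φ ψ : (j : ℤ) → Fin (N j) → (Sph → ℂ)),
          (∀ j k, φ j k ∈ MClass X (xp j k) (a ^ j)) →
          (∀ j k, ψ j k ∈ MClass X (xp j k) (a ^ j)) →
        ∀ r : ℝ, 0 < r → r ≤ Real.pi / 10 →
        ∀ F : Sph → ℂ, IsSphBump X r F →
          (∀ x : Sph,
            Summable (fun p : (j : ℤ) × Fin (N j) =>
              (sphMeasure (E p.1 p.2)).toReal * (‖sphInner F (φ p.1 p.2)‖ *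
                ‖ψ p.1 p.2 x‖)) ∧
            (∑' p : (j : ℤ) × Fin (N j),
                (sphMeasure (E p.1 p.2)).toReal * (‖sphInner F (φ p.1 p.2)‖ *
                  ‖ψ p.1 p.2 x‖)) ≤ C₁) ∧
          TendstoUniformly
            (fun (s : Finset ((j : ℤ) × Fin (N j))) (x : Sph) =>
              ∑ p ∈ s, (sphMeasure (E p.1 p.2)).toReal * (‖sphInner F (φ p.1 p.2)‖ *
                ‖ψ p.1 p.2 x‖))
            (fun x : Sph => ∑' p : (j : ℤ) × Fin (N j),
              (sphMeasure (E p.1 p.2)).toReal * (‖sphInner F (φ p.1 p.2)‖ *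
                ‖ψ p.1 p.2 x‖))
            Filter.atTop := by
  obtain ⟨C₁, hC₁, hmain⟩ :=
    statement_16_general ι X (fun i => (hXsmooth i).continuous) hXspan a ha
  exact ⟨C₁, hC₁, fun N E hE hdisj _ hdiam xp hxp φ ψ hφ hψ r hr _ F hF =>
    hmain N E hE hdisj hdiam xp hxp φ ψ hφ hψ r hr F hF⟩
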